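/- Define a_n^{(d)} for d ≥ 1 by a_n^{(1)} = n+1 and a_n^{(d+1)} = 2∑_{k=0}^n a_k^{(d)} − a_n^{(d)}. Then for every d ≥ 1 and n ≥ 0, a_n^{(d)} = ∑_{k=0}^{d-1} C(d-1,k)·C(d+n-k, d). -/

import Mathlib

open Finset

/-- The sequence `a d n` defined by `a 1 n = n + 1` and
`a (d+1) n = 2 * ∑_{k=0}^n a d k - a d n`. -/
def a : ℕ → ℕ → ℕ
  | 0, _ => 0
  | 1, n => n + 1
  | d + 2, n => 2 * ∑ k ∈ Finset.range (n + 1), a (d + 1) k - a (d + 1) n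

/-! Writing the recurrence without subtraction, `a (d + 1) n` is the sum of the partial sums of
`a d` up to `n` and up to `n - 1`. The partial sums of a shifted binomial column
`j ↦ (m + j - k).choose m` form the column for `m + 1`, shifted by `k` or, when the last term is
omitted, by `k + 1`. Hence each step convolves the coefficients with `(1, 1)`, and Pascal's rule
turns the `d`-th row of binomial coefficients into the next one. -/

theorem sum_range_choose_add_sub {m k : ℕ} (hk : k ≤ m) (n : ℕ) :
    ∑ j ∈ range n, (m + j - k).choose m = (m + n - k).choose (m + 1) := by
  induction n with
  | zero => exact (Nat.choose_eq_zero_of_lt (by lia)).symm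
  | succ n ih =>
    have succ_sub : m + (n + 1) - k = m + n - k + 1 := by lia
    rw [sum_range_succ, ih, succ_sub, Nat.choose_succ_succ', add_comm]

theorem sum_range_sum_mul_choose_add_sub (c : ℕ → ℕ) {s : Finset ℕ} {m : ℕ}
    (hs : ∀ k ∈ s, k ≤ m) (n : ℕ) :
    ∑ j ∈ range n, ∑ k ∈ s, c k * (m + j - k).choose m =
      ∑ k ∈ s, c k * (m + n - k).choose (m + 1) := by
  rw [sum_comm]
  refine sum_congr rfl fun k hk => ?_
  rw [← mul_sum, sum_range_choose_add_sub (hs k hk)]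

theorem a_add_two_eq_sum_add_sum (d n : ℕ) :
    a (d + 2) n = ∑ j ∈ range (n + 1), a (d + 1) j + ∑ j ∈ range n, a (d + 1) j := by
  rw [a, sum_range_succ]
  lia

theorem stmt_6 (d n : ℕ) (hd : 1 ≤ d) :
    a d n = ∑ k ∈ Finset.range d, (d - 1).choose k * (d + n - k).choose d := by
  obtain ⟨d, rfl⟩ := Nat.exists_eq_add_of_le' hd
  clear hd
  rw [Nat.add_sub_cancel]
  induction d generalizing n with
  | zero => simp [a, add_comm]
  | succ d ih =>
    have sum_a (N : ℕ) : ∑ j ∈ range N, a (d + 1) j =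
        ∑ k ∈ range (d + 1), d.choose k * (d + 1 + N - k).choose (d + 2) := by
      simp only [ih]
      exact sum_range_sum_mul_choose_add_sub d.choose (fun _ hk => (mem_range.mp hk).le) N
    have add_succ : d + 1 + (n + 1) = d + 2 + n := by lia
    have sub_succ (k : ℕ) : d + 1 + n - k = d + 2 + n - (k + 1) := by lia
    calc a (d + 2) n
      _ = ∑ j ∈ range (n + 1), a (d + 1) j + ∑ j ∈ range n, a (d + 1) j :=
        a_add_two_eq_sum_add_sum d n
      _ = ∑ k ∈ range (d + 1), d.choose k * (d + 2 + n - k).choose (d + 2) +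
            ∑ k ∈ range (d + 1), d.choose k * (d + 2 + n - (k + 1)).choose (d + 2) := by
        simp only [sum_a, add_succ, sub_succ]
      _ = ∑ k ∈ range (d + 2), (d + 1).choose k * (d + 2 + n - k).choose (d + 2) :=
        (sum_choose_succ_mul (fun k _ => (d + 2 + n - k).choose (d + 2)) d).symm
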